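/- Let n ≥ k ≥ 1 with n - k even. There is a bijection between the set of non-crossing half-pairings on [n] with exactly k through strings and the set of two-colorings of the points 1, ..., n (arranged on a circle) using (n-k)/2 black dots and (n+k)/2 white dots: given a half-pairing, color the outward-oriented point of each pair black and all other points (the inward-oriented points of pairs and the through strings) white; this map is a bijection onto the set of all such colorings. -/

import Mathlib

/-!
The black dots of a half-pairing determine it, and every colouring occurs.

*Counting.* Since a through string exists and no pair separates two of them (`nc_tilde`),
exactly one point of each pair is black (`black_or_black`, `not_black_of_black`). Hence
`n = #through strings + 2 #black dots` (`card_through_add`).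

*Injectivity.* Two half-pairings with the same black dots have the same pairs, by strong
induction on the length of arcs (`pairs_of_same_black`).

*Surjectivity.* A colouring with `k ≥ 1` more white than black dots has a height function
`h : ℤ → ℤ` which goes up at black and down at white dots and satisfies
`h (z + n) = h z - k` (`exists_height`). Matching each up-step with the down-step that first
undoes it (`Arc`) gives a non-crossing, `n`-periodic matching by arcs shorter than `n`; every
down-step below an arc is itself matched, so the unmatched down-steps lie below no arc.
Modulo `n` this is a half-pairing whose black dots are the given ones
(`exists_halfPairing`).
-/

namespace NCC

/-- A letter `u_i^{±1}`: a generator index together with a sign. -/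
abbrev Letter (N : ℕ) := Fin N × Bool

/-- The inverse of a letter. -/
def linv {N : ℕ} (l : Letter N) : Letter N := (l.1, !l.2)

/-- One cyclic reduction step: either a linear reduction step (removal of two
adjacent letters which are inverses of each other), or removal of the first and
last letters when they are inverses of each other. -/
def CyclicStep {N : ℕ} (w w' : List (Letter N)) : Prop :=
  FreeGroup.Red.Step w w' ∨
    ∃ (l : Letter N) (m : List (Letter N)), w = l :: (m ++ [linv l]) ∧ w' = m

/-- `w` reduces cyclically (in zero or more steps) to `v`. -/
def CycReducesTo {N : ℕ} (w v : List (Letter N)) : Prop :=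
  Relation.ReflTransGen CyclicStep w v

/-- A word is linearly reduced when no two adjacent letters are inverses of
each other. -/
def LinReduced {N : ℕ} (w : List (Letter N)) : Prop :=
  List.Chain' (fun a b => b ≠ linv a) w

/-- A word is cyclically reduced iff `w ++ w` is linearly reduced, i.e. it is
linearly reduced and its last letter is not the inverse of its first letter. -/
def CycReduced {N : ℕ} (w : List (Letter N)) : Prop :=
  LinReduced (w ++ w)

/-- A word is reducible to 1 if it linearly reduces to the empty word. -/
def ReducibleToOne {N : ℕ} (w : List (Letter N)) : Prop :=
  FreeGroup.Red w []

/-- A word has good reduction: no nonempty prefix is reducible to 1, and its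
linear reduction is cyclically reduced. -/
def GoodReduction {N : ℕ} (w : List (Letter N)) : Prop :=
  (∀ s, s <+: w → s ≠ [] → ¬ ReducibleToOne s) ∧
    CycReduced (FreeGroup.reduce w)

/-- The first `i` letters of the infinite word `w_∞ = w w w ⋯`. -/
def infTake {N : ℕ} (w : List (Letter N)) (i : ℕ) : List (Letter N) :=
  ((List.replicate i w).flatten).take i

open scoped Classical

/-- `i` and `j` lie in a common block of the partition `P`. -/
def Rel {n : ℕ} (P : Finpartition (Finset.univ : Finset (Fin n))) (i j : Fin n) : Prop :=
  ∃ B ∈ P.parts, i ∈ B ∧ j ∈ B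

/-- `i` lies in a singleton block of `P`. -/
def IsSingleton {n : ℕ} (P : Finpartition (Finset.univ : Finset (Fin n))) (i : Fin n) : Prop :=
  ∃ B ∈ P.parts, i ∈ B ∧ B.card = 1

/-- The relation of the partition `π̃` obtained from `P` by merging all
singleton blocks into a single block. -/
def RelTilde {n : ℕ} (P : Finpartition (Finset.univ : Finset (Fin n))) (i j : Fin n) : Prop :=
  Rel P i j ∨ (IsSingleton P i ∧ IsSingleton P j)

/-- An equivalence-like relation on `[n]` is non-crossing when there are no
`i₁ < i₂ < i₃ < i₄` with `i₁ ∼ i₃`, `i₂ ∼ i₄` but `i₁ ≁ i₂`. -/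
def NonCrossingRel {n : ℕ} (r : Fin n → Fin n → Prop) : Prop :=
  ∀ i1 i2 i3 i4 : Fin n, i1 < i2 → i2 < i3 → i3 < i4 → r i1 i3 → r i2 i4 → r i1 i2

/-- A non-crossing half-pairing on `[n]`: a non-crossing partition all of whose
blocks have at most two elements, with at least one singleton block (through
string), such that merging all singleton blocks still gives a non-crossing
partition. -/
structure HalfPairing (n : ℕ) where
  P : Finpartition (Finset.univ : Finset (Fin n))
  card_le : ∀ B ∈ P.parts, B.card ≤ 2
  exists_singleton : ∃ i, IsSingleton P i
  nc : NonCrossingRel (Rel P)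
  nc_tilde : NonCrossingRel (RelTilde P)

/-- `r` and `s` form a pair (a two-element block) of `π`. -/
def Pairs {n : ℕ} (π : HalfPairing n) (r s : Fin n) : Prop :=
  r ≠ s ∧ Rel π.P r s

/-- Membership in the cyclic interval `[i, j]` (going clockwise from `i` to
`j`, endpoints included). -/
def InCyc {n : ℕ} (i j x : Fin n) : Prop :=
  (x.val + n - i.val) % n ≤ (j.val + n - i.val) % n

/-- Cyclic successor of `i` in `[n]`. -/
def cnext {n : ℕ} (i : Fin n) : Fin n :=
  ⟨(i.val + 1) % n, Nat.mod_lt _ i.pos⟩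

/-- Cyclic predecessor of `i` in `[n]`. -/
def cprev {n : ℕ} (i : Fin n) : Fin n :=
  ⟨(i.val + n - 1) % n, Nat.mod_lt _ i.pos⟩

/-- `a + j` modulo `n`. -/
def cadd {n : ℕ} (a j : Fin n) : Fin n :=
  ⟨(a.val + j.val) % n, Nat.mod_lt _ a.pos⟩

/-- `x - a` modulo `n`. -/
def csub {n : ℕ} (x a : Fin n) : Fin n :=
  ⟨(x.val + n - a.val) % n, Nat.mod_lt _ a.pos⟩

/-- `i` has the outward orientation: it is a singleton, or it is the point of a
pair `(i, s)` such that the cyclic interval `[i, s]` contains no singleton. -/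
def OutOriented {n : ℕ} (π : HalfPairing n) (i : Fin n) : Prop :=
  IsSingleton π.P i ∨
    ∃ s, Pairs π i s ∧ ∀ x, InCyc i s x → ¬ IsSingleton π.P x

/-- `i` covers `j`: both are outward oriented, and either `j` is the cyclic
successor of `i`, or `π` pairs each point of the cyclic interval
`[i+1, j-1]` with another point of `[i+1, j-1]`. -/
def Covers {n : ℕ} (π : HalfPairing n) (i j : Fin n) : Prop :=
  OutOriented π i ∧ OutOriented π j ∧
    (j = cnext i ∨
      ∀ x, InCyc (cnext i) (cprev j) x →
        ∃ y, y ≠ x ∧ InCyc (cnext i) (cprev j) y ∧ Pairs π x y)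

/-- The set of through strings (singleton blocks) of `π`. -/
noncomputable def throughFinset {n : ℕ} (π : HalfPairing n) : Finset (Fin n) :=
  Finset.univ.filter (fun i => IsSingleton π.P i)

/-- The word formed by the letters of `w` at the through strings of `π`,
read in increasing order of position. -/
noncomputable def throughWord {n N : ℕ} (w : Fin n → Letter N) (π : HalfPairing n) :
    List (Letter N) :=
  ((throughFinset π).sort (· ≤ ·)).map w

/-- `π` is a `w`-pairing: paired positions carry mutually inverse letters, and
the through-string letters, read in order, form a cyclic reduction of `w`. -/
def IsWPairing {n N : ℕ} (w : Fin n → Letter N) (π : HalfPairing n) : Prop :=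
  (∀ r s, Pairs π r s → w r = linv (w s)) ∧
    CycReducesTo (List.ofFn w) (throughWord w π) ∧ CycReduced (throughWord w π)

/-- `π` is `w`-admissible: it is a `w`-pairing and `l_i ≠ l_j⁻¹` whenever
`i` covers `j`. -/
def Admissible {n N : ℕ} (w : Fin n → Letter N) (π : HalfPairing n) : Prop :=
  IsWPairing w π ∧ ∀ i j, Covers π i j → w i ≠ linv (w j)

/-! ### Clockwise distance -/

/-- The clockwise distance from `i` to `x` in `[n]`, a number in `{0, …, n-1}`. -/
def cdist {n : ℕ} (i x : Fin n) : ℕ := (x.val + n - i.val) % n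

lemma cdist_of_le {n : ℕ} {i x : Fin n} (h : i ≤ x) : cdist i x = x.val - i.val := by
  have h' : i.val ≤ x.val := h
  have : x.val + n - i.val = (x.val - i.val) + n := by omega
  rw [cdist, this, Nat.add_mod_right, Nat.mod_eq_of_lt (by omega)]

lemma cdist_of_lt {n : ℕ} {i x : Fin n} (h : x < i) : cdist i x = x.val + n - i.val := by
  have h' : x.val < i.val := h
  rw [cdist, Nat.mod_eq_of_lt (by omega)]

/-- Clockwise distance without the modulus, in a form suited to linear arithmetic. -/
lemma cdist_cases {n : ℕ} (i x : Fin n) :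
    (i.val ≤ x.val ∧ cdist i x + i.val = x.val) ∨
      (x.val < i.val ∧ cdist i x + i.val = x.val + n) := by
  rcases le_or_gt i x with h | h
  · have h' : i.val ≤ x.val := h
    rw [cdist_of_le h]; omega
  · have h' : x.val < i.val := h
    rw [cdist_of_lt h]; omega

lemma inCyc_iff {n : ℕ} (i j x : Fin n) : InCyc i j x ↔ cdist i x ≤ cdist i j := Iff.rfl

/-! ### Blocks of a partition -/

section Partition

variable {n : ℕ} {P Q : Finpartition (Finset.univ : Finset (Fin n))}

lemma rel_refl (i : Fin n) : Rel P i i := by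
  obtain ⟨B, hB, hi⟩ := P.exists_mem (Finset.mem_univ i)
  exact ⟨B, hB, hi, hi⟩

lemma rel_symm {i j : Fin n} (h : Rel P i j) : Rel P j i := by
  obtain ⟨B, hB, hi, hj⟩ := h
  exact ⟨B, hB, hj, hi⟩

lemma rel_trans {i j l : Fin n} (h : Rel P i j) (h' : Rel P j l) : Rel P i l := by
  obtain ⟨B, hB, hi, hj⟩ := h
  obtain ⟨C, hC, hj', hl⟩ := h'
  obtain rfl := P.eq_of_mem_parts hB hC hj hj'
  exact ⟨B, hB, hi, hl⟩

lemma isSingleton_iff {i : Fin n} : IsSingleton P i ↔ ∀ j, Rel P i j → j = i := by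
  constructor
  · rintro ⟨B, hB, hi, hc⟩ j ⟨C, hC, hi', hj⟩
    obtain rfl := P.eq_of_mem_parts hB hC hi hi'
    exact Finset.card_le_one.mp hc.le _ hj _ hi
  · intro h
    obtain ⟨B, hB, hi⟩ := P.exists_mem (Finset.mem_univ i)
    refine ⟨B, hB, hi, Finset.card_eq_one.mpr ⟨i, ?_⟩⟩
    ext j
    rw [Finset.mem_singleton]
    exact ⟨fun hj => h j ⟨B, hB, hi, hj⟩, fun hj => hj ▸ hi⟩

lemma rel_tilde_symm {i j : Fin n} (h : RelTilde P i j) : RelTilde P j i := by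
  rcases h with h | h
  · exact Or.inl (rel_symm h)
  · exact Or.inr h.symm

lemma rel_tilde_trans {i j l : Fin n} (h : RelTilde P i j) (h' : RelTilde P j l) :
    RelTilde P i l := by
  rcases h with h | ⟨h1, h2⟩
  · rcases h' with h' | ⟨h3, h4⟩
    · exact Or.inl (rel_trans h h')
    · obtain rfl := isSingleton_iff.mp h3 i (rel_symm h)
      exact Or.inr ⟨h3, h4⟩
  · rcases h' with h' | ⟨_, h4⟩
    · obtain rfl := isSingleton_iff.mp h2 l h'
      exact Or.inr ⟨h1, h2⟩
    · exact Or.inr ⟨h1, h4⟩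

/-- A partition is determined by the relation of lying in a common block. -/
lemma eq_of_rel (h : ∀ i j, Rel P i j ↔ Rel Q i j) : P = Q := by
  have key : ∀ P Q : Finpartition (Finset.univ : Finset (Fin n)),
      (∀ i j, Rel P i j ↔ Rel Q i j) → ∀ B ∈ P.parts, B ∈ Q.parts := by
    intro P Q h B hB
    obtain ⟨i, hi⟩ := P.nonempty_of_mem_parts hB
    obtain ⟨C, hC, hiC⟩ := Q.exists_mem (Finset.mem_univ i)
    have : B = C := by
      ext j
      constructor
      · intro hj
        obtain ⟨D, hD, hiD, hjD⟩ := (h i j).mp ⟨B, hB, hi, hj⟩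
        rwa [Q.eq_of_mem_parts hC hD hiC hiD]
      · intro hj
        obtain ⟨D, hD, hiD, hjD⟩ := (h i j).mpr ⟨C, hC, hiC, hj⟩
        rwa [P.eq_of_mem_parts hB hD hi hiD]
    exact this ▸ hC
  ext B
  exact ⟨key P Q h B, key Q P (fun i j => (h i j).symm) B⟩

end Partition

/-! ### Black dots and their number -/

/-- The points of `[n]` split into a set `T`, a set `S` and the partners of the points
of `S`, so `n = #T + 2 #S`. -/
lemma card_add_two_mul {n : ℕ} (S T : Finset (Fin n)) (R : Fin n → Fin n → Prop)
    (hST : ∀ i ∈ S, i ∉ T)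
    (hS : ∀ i ∈ S, ∃ s, s ∉ S ∧ s ∉ T ∧ R i s)
    (hW : ∀ s, s ∉ S → s ∉ T → ∃ i ∈ S, R i s)
    (hl : ∀ i j s, R i s → R j s → i = j)
    (hr : ∀ i s t, R i s → R i t → s = t) :
    T.card + 2 * S.card = n := by
  have hdisj : Disjoint S T := Finset.disjoint_left.mpr hST
  have hle : S.card ≤ ((S ∪ T)ᶜ).card := by
    refine Finset.card_le_card_of_forall_subsingleton R ?_ ?_
    · intro i hi
      obtain ⟨s, h1, h2, h3⟩ := hS i hi
      exact ⟨s, by simp [h1, h2], h3⟩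
    · intro s _ i hi j hj
      exact hl i j s hi.2 hj.2
  have hge : ((S ∪ T)ᶜ).card ≤ S.card := by
    refine Finset.card_le_card_of_forall_subsingleton (fun s i => R i s) ?_ ?_
    · intro s hs
      simp only [Finset.mem_compl, Finset.mem_union, not_or] at hs
      exact hW s hs.1 hs.2
    · intro i _ s hs t ht
      exact hr i s t hs.2 ht.2
  have h1 := Finset.card_add_card_compl (S ∪ T)
  rw [Finset.card_union_of_disjoint hdisj, Fintype.card_fin] at h1
  omega

section HalfPairing

variable {n : ℕ} (π : HalfPairing n)

lemma pairs_symm {i j : Fin n} (h : Pairs π i j) : Pairs π j i := ⟨h.1.symm, rel_symm h.2⟩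

lemma pairs_unique {i j l : Fin n} (h : Pairs π i j) (h' : Pairs π i l) : j = l := by
  obtain ⟨hij, B, hB, hi, hj⟩ := h
  obtain ⟨hil, C, hC, hi', hl⟩ := h'
  obtain rfl := π.P.eq_of_mem_parts hB hC hi hi'
  by_contra hjl
  have hsub : ({i, j, l} : Finset (Fin n)) ⊆ B := by
    intro x hx
    simp only [Finset.mem_insert, Finset.mem_singleton] at hx
    rcases hx with rfl | rfl | rfl <;> assumption
  have h3 : ({i, j, l} : Finset (Fin n)).card = 3 := Finset.card_eq_three.mpr
    ⟨i, j, l, hij, hil, hjl, rfl⟩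
  have := Finset.card_le_card hsub
  have := π.card_le B hB
  omega

lemma not_singleton_of_pairs {i j : Fin n} (h : Pairs π i j) : ¬ IsSingleton π.P i :=
  fun hs => h.1 (isSingleton_iff.mp hs j h.2).symm

lemma exists_pairs {i : Fin n} (h : ¬ IsSingleton π.P i) : ∃ j, Pairs π i j := by
  rw [isSingleton_iff] at h
  push Not at h
  obtain ⟨j, hj, hne⟩ := h
  exact ⟨j, hne.symm, hj⟩

/-- `i` is a black dot of `π`: it has a partner `s` such that no through string lies in
the cyclic interval `[i, s]`. -/
def Black (i : Fin n) : Prop :=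
  ∃ s, Pairs π i s ∧ ∀ x, InCyc i s x → ¬ IsSingleton π.P x

lemma black_iff (i : Fin n) : OutOriented π i ∧ ¬ IsSingleton π.P i ↔ Black π i := by
  constructor
  · rintro ⟨h | h, hn⟩
    · exact absurd h hn
    · exact h
  · intro h
    refine ⟨Or.inr h, ?_⟩
    obtain ⟨s, hs, -⟩ := h
    exact not_singleton_of_pairs π hs

lemma Black.arc {i s : Fin n} (h : Black π i) (hs : Pairs π i s) :
    ∀ x, InCyc i s x → ¬ IsSingleton π.P x := by
  obtain ⟨t, ht, h⟩ := h
  exact pairs_unique π ht hs ▸ h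

/-- Being non-crossing does not depend on the point where the circle is cut: the
condition for `π̃` holds for the linear order starting at any base point `o`. -/
lemma nc_cyclic (o a b c d : Fin n) (hab : cdist o a < cdist o b) (hbc : cdist o b < cdist o c)
    (hcd : cdist o c < cdist o d) (hac : RelTilde π.P a c) (hbd : RelTilde π.P b d) :
    RelTilde π.P a b := by
  have h : (a < b ∧ b < c ∧ c < d) ∨ (b < c ∧ c < d ∧ d < a) ∨ (c < d ∧ d < a ∧ a < b) ∨
      (d < a ∧ a < b ∧ b < c) := by
    have := cdist_cases o a
    have := cdist_cases o b
    have := cdist_cases o c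
    have := cdist_cases o d
    simp only [Fin.lt_def]
    omega
  rcases h with ⟨h1, h2, h3⟩ | ⟨h1, h2, h3⟩ | ⟨h1, h2, h3⟩ | ⟨h1, h2, h3⟩
  · exact π.nc_tilde _ _ _ _ h1 h2 h3 hac hbd
  · exact rel_tilde_trans hac (rel_tilde_symm
      (π.nc_tilde _ _ _ _ h1 h2 h3 hbd (rel_tilde_symm hac)))
  · have := π.nc_tilde _ _ _ _ h1 h2 h3 (rel_tilde_symm hac) (rel_tilde_symm hbd)
    exact rel_tilde_trans hac (rel_tilde_trans this (rel_tilde_symm hbd))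
  · have := π.nc_tilde _ _ _ _ h1 h2 h3 (rel_tilde_symm hbd) hac
    exact rel_tilde_symm (rel_tilde_trans hbd this)

lemma cdist_self (i : Fin n) : cdist i i = 0 := by
  have := cdist_cases i i; omega

lemma cdist_inj {i x y : Fin n} (h : cdist i x = cdist i y) : x = y := by
  have := cdist_cases i x
  have := cdist_cases i y
  ext; omega

lemma not_relTilde_of_pairs {i s x : Fin n} (h : Pairs π i s) (h1 : x ≠ i) (h2 : x ≠ s) :
    ¬ RelTilde π.P i x := by
  rintro (hr | ⟨hr, -⟩)
  · exact h2 (pairs_unique π ⟨h1.symm, hr⟩ h)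
  · exact not_singleton_of_pairs π h hr

/-- The partner of a point strictly inside the arc of a pair is again strictly inside. -/
lemma nested {i s x y : Fin n} (h : Pairs π i s) (hxy : Pairs π x y)
    (h0 : 0 < cdist i x) (h1 : cdist i x < cdist i s) :
    0 < cdist i y ∧ cdist i y < cdist i s := by
  have hxi : x ≠ i := by rintro rfl; simp [cdist_self] at h0
  have hxs : x ≠ s := by rintro rfl; simp at h1
  have hyi : cdist i y ≠ cdist i i := by
    intro he
    obtain rfl := cdist_inj he
    exact hxs (pairs_unique π (pairs_symm π hxy) h)
  have hys : cdist i y ≠ cdist i s := by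
    intro he
    obtain rfl := cdist_inj he
    exact hxi (pairs_unique π (pairs_symm π hxy) (pairs_symm π h))
  rw [cdist_self] at hyi
  refine ⟨by omega, ?_⟩
  by_contra hlt
  exact not_relTilde_of_pairs π h hxi hxs
    (nc_cyclic π i i x s y (by rwa [cdist_self]) h1 (by omega) (Or.inl h.2) (Or.inl hxy.2))

/-- At least one point of each pair is black: otherwise the pair would separate two
through strings. -/
lemma black_or_black {i s : Fin n} (h : Pairs π i s) : Black π i ∨ Black π s := by
  by_contra hcon
  rw [not_or] at hcon
  obtain ⟨h1, h2⟩ := hcon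
  have h1' : ∃ x, InCyc i s x ∧ IsSingleton π.P x := by
    by_contra hx
    push Not at hx
    exact h1 ⟨s, h, hx⟩
  have h2' : ∃ x, InCyc s i x ∧ IsSingleton π.P x := by
    by_contra hx
    push Not at hx
    exact h2 ⟨i, pairs_symm π h, hx⟩
  obtain ⟨x, hx, hxs⟩ := h1'
  obtain ⟨y, hy, hys⟩ := h2'
  have hi := not_singleton_of_pairs π h
  have hs := not_singleton_of_pairs π (pairs_symm π h)
  have hxi : x ≠ i := by rintro rfl; exact hi hxs
  have hxs' : x ≠ s := by rintro rfl; exact hs hxs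
  have hyi : y ≠ i := by rintro rfl; exact hi hys
  have hys' : y ≠ s := by rintro rfl; exact hs hys
  rw [inCyc_iff] at hx hy
  have hi0 := cdist_self i
  have e1 : cdist i x ≠ cdist i i := fun he => hxi (cdist_inj he)
  have e2 : cdist i x ≠ cdist i s := fun he => hxs' (cdist_inj he)
  have e3 : cdist i y ≠ cdist i i := fun he => hyi (cdist_inj he)
  have e4 : cdist i s < cdist i y := by
    have := cdist_cases i y
    have := cdist_cases i s
    have := cdist_cases s i
    have := cdist_cases s y
    have := Fin.val_ne_of_ne hyi
    have := Fin.val_ne_of_ne hys'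
    omega
  exact not_relTilde_of_pairs π h hxi hxs'
    (nc_cyclic π i i x s y (by omega) (by omega) e4 (Or.inl h.2) (Or.inr ⟨hxs, hys⟩))

/-- At most one point of each pair is black: a through string exists, and it lies on one
of the two arcs of the pair. -/
lemma not_black_of_black {i s : Fin n} (h : Pairs π i s) (hi : Black π i) : ¬ Black π s := by
  intro hs
  obtain ⟨x, hx⟩ := π.exists_singleton
  have h1 : ¬ InCyc i s x := fun hc => hi.arc π h x hc hx
  have h2 : ¬ InCyc s i x := fun hc => hs.arc π (pairs_symm π h) x hc hx
  rw [inCyc_iff] at h1 h2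
  have := Fin.val_ne_of_ne h.1
  have := cdist_cases i x
  have := cdist_cases i s
  have := cdist_cases s i
  have := cdist_cases s x
  omega

/-- Every point is a through string, a black dot or the partner of a unique black dot. -/
lemma card_through_add : (throughFinset π).card + 2 * {i | Black π i}.ncard = n := by
  rw [Set.ncard_eq_toFinset_card']
  refine card_add_two_mul _ _ (fun i s => Black π i ∧ Pairs π i s) ?_ ?_ ?_ ?_ ?_
  · intro i hi hiT
    simp only [Set.mem_toFinset, Set.mem_ofPred_eq, throughFinset, Finset.mem_filter] at hi hiT
    obtain ⟨s, hs, -⟩ := hi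
    exact not_singleton_of_pairs π hs hiT.2
  · intro i hi
    simp only [Set.mem_toFinset, Set.mem_ofPred_eq] at hi
    obtain ⟨s, hs, h⟩ := hi
    refine ⟨s, ?_, ?_, ⟨s, hs, h⟩, hs⟩
    · simpa using not_black_of_black π hs ⟨s, hs, h⟩
    · simpa [throughFinset] using not_singleton_of_pairs π (pairs_symm π hs)
  · intro s h1 h2
    simp only [Set.mem_toFinset, Set.mem_ofPred_eq, throughFinset, Finset.mem_filter,
      Finset.mem_univ, true_and] at h1 h2
    obtain ⟨i, hi⟩ := exists_pairs π h2
    have hb := (black_or_black π hi).resolve_left h1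
    exact ⟨i, by simpa using hb, hb, pairs_symm π hi⟩
  · intro i j s h1 h2
    exact pairs_unique π (pairs_symm π h1.2) (pairs_symm π h2.2)
  · intro i s t h1 h2
    exact pairs_unique π h1.2 h2.2

end HalfPairing

/-! ### Injectivity -/

/-- Half-pairings with the same black dots have the same pairs. Induction on the length
of the arc `[i, s]`: if the partner `s'` of the black dot `i` in `π'` lies beyond `s`,
then `s` is matched in `π'` with a black dot `x` strictly between `i` and `s`, and the
shorter arc of `x` in `π` contradicts the induction hypothesis. -/
lemma pairs_of_same_black {n : ℕ} (d : ℕ) : ∀ (π π' : HalfPairing n),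
    (∀ i, Black π i ↔ Black π' i) → ∀ i s, Black π i → Pairs π i s → cdist i s = d →
      Pairs π' i s := by
  induction d using Nat.strong_induction_on with
  | _ d ih =>
    intro π π' hb i s hi his hd
    have hi' := (hb i).mp hi
    obtain ⟨s', hs', hs'arc⟩ := hi'
    rcases lt_trichotomy (cdist i s') (cdist i s) with hlt | heq | hgt
    · have h := ih _ (hd ▸ hlt) π' π (fun j => (hb j).symm) i s' ((hb i).mp hi) hs' rfl
      rwa [pairs_unique π his h]
    · rwa [cdist_inj heq] at hs'
    · have hs0 : 0 < cdist i s := by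
        have h0 : cdist i s ≠ cdist i i := fun he => his.1 (cdist_inj he).symm
        rw [cdist_self] at h0
        omega
      have hsns : ¬ IsSingleton π'.P s := hs'arc s hgt.le
      obtain ⟨x, hsx⟩ := exists_pairs π' hsns
      have hswhite : ¬ Black π' s := by
        rw [← hb]
        exact not_black_of_black π his hi
      have hx' : Black π' x := (black_or_black π' hsx).resolve_left hswhite
      obtain ⟨hx0, hx1⟩ := nested π' hs' hsx hs0 hgt
      -- if `x` came after `s`, the arc `[s, x]` would be free of through strings
      have hxs : cdist i x < cdist i s := by
        by_contra hge
        refine hswhite ⟨x, hsx, fun z hz => hs'arc z ?_⟩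
        rw [inCyc_iff] at hz ⊢
        have := cdist_cases i z
        have := cdist_cases i s
        have := cdist_cases i s'
        have := cdist_cases i x
        have := cdist_cases s z
        have := cdist_cases s x
        omega
      have hx : Black π x := (hb x).mpr hx'
      obtain ⟨y, hxy, hxyarc⟩ := hx
      obtain ⟨hy0, hy1⟩ := nested π his hxy hx0 hxs
      have hlen : cdist x y < d := by
        by_contra hge
        obtain ⟨z, hz⟩ := π.exists_singleton
        have h1 : ¬ cdist i z ≤ cdist i s := fun h => hi.arc π his z h hz
        have h2 : ¬ cdist x z ≤ cdist x y := fun h => hxyarc z h hz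
        have := cdist_cases i z
        have := cdist_cases i s
        have := cdist_cases i x
        have := cdist_cases i y
        have := cdist_cases x y
        have := cdist_cases x z
        omega
      have h := ih _ hlen π π' hb x y ⟨y, hxy, hxyarc⟩ hxy rfl
      have : y = s := pairs_unique π' h (pairs_symm π' hsx)
      subst this
      omega

lemma halfPairing_ext {n : ℕ} {π π' : HalfPairing n} (h : ∀ i, Black π i ↔ Black π' i) :
    π = π' := by
  have key : ∀ π π' : HalfPairing n, (∀ i, Black π i ↔ Black π' i) →
      ∀ i j, Rel π.P i j → Rel π'.P i j := by
    intro π π' h i j hij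
    by_cases hne : i = j
    · exact hne ▸ rel_refl i
    · have hp : Pairs π i j := ⟨hne, hij⟩
      rcases black_or_black π hp with hb | hb
      · exact (pairs_of_same_black _ π π' h i j hb hp rfl).2
      · exact rel_symm (pairs_of_same_black _ π π' h j i hb (pairs_symm π hp) rfl).2
  have hP : π.P = π'.P :=
    eq_of_rel fun i j => ⟨key π π' h i j, key π' π (fun i => (h i).symm) i j⟩
  cases π
  cases π'
  cases hP
  rfl

/-! ### Arcs below a lattice path -/

section Height

variable {n : ℕ} {k : ℤ} {h : ℤ → ℤ}

/-- `Arc h a b`: the up-step of the lattice path `h` from `a` to `a + 1` is undone by the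
down-step from `b` to `b + 1`, i.e. `b + 1` is the first position after `a` at which the
path is back at height `h a`. -/
def Arc (h : ℤ → ℤ) (a b : ℤ) : Prop :=
  a < b ∧ h (b + 1) = h a ∧ ∀ x, a < x → x ≤ b → h a < h x

lemma Arc.right_unique {a b b' : ℤ} (hb : Arc h a b) (hb' : Arc h a b') : b = b' := by
  obtain ⟨h1, h2, h3⟩ := hb
  obtain ⟨h1', h2', h3'⟩ := hb'
  by_contra hne
  rcases lt_or_gt_of_ne hne with hlt | hlt
  · have := h3' (b + 1) (by omega) (by omega); omega
  · have := h3 (b' + 1) (by omega) (by omega); omega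

lemma Arc.left_unique {a a' b : ℤ} (hb : Arc h a b) (hb' : Arc h a' b) : a = a' := by
  obtain ⟨h1, h2, h3⟩ := hb
  obtain ⟨h1', h2', h3'⟩ := hb'
  by_contra hne
  rcases lt_or_gt_of_ne hne with hlt | hlt
  · have := h3 a' hlt (by omega); omega
  · have := h3' a hlt (by omega); omega

lemma Arc.nested {a b a' b' : ℤ} (hb : Arc h a b) (hb' : Arc h a' b') (h1 : a < a')
    (h2 : a' ≤ b) : b' < b := by
  by_contra hge
  have hne : b ≠ b' := by
    rintro rfl
    have := hb.left_unique hb'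
    omega
  have := hb.2.2 a' h1 h2
  have := hb'.2.2 (b + 1) (by omega) (by omega)
  have := hb.2.1
  omega

lemma Arc.shift (hper : ∀ z, h (z + n) = h z - k) {a b : ℤ} (hb : Arc h a b) :
    Arc h (a + n) (b + n) := by
  obtain ⟨h1, h2, h3⟩ := hb
  refine ⟨by omega, ?_, ?_⟩
  · have := hper (b + 1)
    have := hper a
    rw [show b + n + 1 = b + 1 + n by ring]
    omega
  · intro x hx hx'
    have := h3 (x - n) (by omega) (by omega)
    have h4 := hper (x - n)
    have := hper a
    rw [sub_add_cancel] at h4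
    omega

lemma Arc.unshift (hper : ∀ z, h (z + n) = h z - k) {a b : ℤ} (hb : Arc h a b) :
    Arc h (a - n) (b - n) := by
  obtain ⟨h1, h2, h3⟩ := hb
  refine ⟨by omega, ?_, ?_⟩
  · have h4 := hper (b - n + 1)
    have h5 := hper (a - n)
    rw [sub_add_cancel] at h5
    rw [show b - n + 1 + n = b + 1 by ring] at h4
    omega
  · intro x hx hx'
    have := h3 (x + n) (by omega) (by omega)
    have h4 := hper (a - n)
    have := hper x
    rw [sub_add_cancel] at h4
    omega

lemma Arc.length_lt (hk : 0 < k) (hn : 0 < n) (hper : ∀ z, h (z + n) = h z - k) {a b : ℤ}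
    (hb : Arc h a b) : b < a + n := by
  by_contra hge
  have := hb.2.2 (a + n) (by omega) (by omega)
  have := hper a
  omega

/-- Each up-step is matched, because the path drops below every level. -/
lemma exists_arc_right (hk : 0 < k) (hn : 0 < n) (hper : ∀ z, h (z + n) = h z - k)
    (hstep : ∀ z, h (z + 1) = h z + 1 ∨ h (z + 1) = h z - 1) {a : ℤ} (ha : h (a + 1) = h a + 1) :
    ∃ b, Arc h a b := by
  have hex : ∃ d : ℕ, h (a + 1 + d) ≤ h a := by
    refine ⟨n - 1, ?_⟩
    have := hper a
    rw [show a + 1 + ((n - 1 : ℕ) : ℤ) = a + n by omega]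
    omega
  classical
  have hmin := fun m => Nat.find_min hex (m := m)
  have hd := Nat.find_spec hex
  set d := Nat.find hex
  have hd0 : d ≠ 0 := by
    intro h0
    rw [h0] at hd
    simp at hd
    omega
  have habove : ∀ x, a < x → x ≤ a + d → h a < h x := by
    intro x hx hx'
    have := hmin (x - a - 1).toNat (by omega)
    rw [show a + 1 + ((x - a - 1).toNat : ℤ) = x by omega] at this
    omega
  refine ⟨a + d, by omega, ?_, habove⟩
  have h1 := habove (a + d) (by omega) le_rfl
  have h2 := hstep (a + d)
  rw [show a + 1 + (d : ℤ) = a + d + 1 by ring] at hd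
  omega

/-- A down-step below an arc is matched: going left from it, the path reaches the level
of its end before leaving the arc. -/
lemma exists_arc_left (hstep : ∀ z, h (z + 1) = h z + 1 ∨ h (z + 1) = h z - 1) {a b x : ℤ}
    (hab : Arc h a b) (h1 : a < x) (h2 : x ≤ b) (hx : h (x + 1) = h x - 1) :
    ∃ y, Arc h y x := by
  have hax : h a ≤ h (x + 1) := by
    rcases eq_or_lt_of_le h2 with rfl | hlt
    · exact hab.2.1.ge
    · exact (hab.2.2 (x + 1) (by omega) (by omega)).le
  have hex : ∃ d : ℕ, h (x - 1 - d) ≤ h (x + 1) := by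
    refine ⟨(x - 1 - a).toNat, ?_⟩
    rwa [show x - 1 - ((x - 1 - a).toNat : ℤ) = a by omega]
  classical
  have hmin := fun m => Nat.find_min hex (m := m)
  have hd := Nat.find_spec hex
  set d := Nat.find hex
  have habove : ∀ z, x - 1 - d < z → z ≤ x → h (x + 1) < h z := by
    intro z hz hz'
    rcases eq_or_lt_of_le hz' with rfl | hlt
    · omega
    · have := hmin (x - 1 - z).toNat (by omega)
      rw [show x - 1 - ((x - 1 - z).toNat : ℤ) = z by omega] at this
      omega
  have heq : h (x + 1) = h (x - 1 - d) := by
    have h3 := habove (x - 1 - d + 1) (by omega) (by omega)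
    have h4 := hstep (x - 1 - d)
    omega
  exact ⟨x - 1 - d, by omega, heq, fun z hz hz' => heq ▸ habove z hz hz'⟩

end Height

/-! ### From colourings to half-pairings -/

/-- Each colouring with `k` more white than black dots has a height function on `ℤ`: it goes
up at black dots, down at white dots and is `n`-periodic up to a drop by `k`. -/
lemma exists_height {n k : ℕ} (hn : 0 < n) (S : Finset (Fin n)) (hS : k + 2 * S.card = n) :
    ∃ h : ℤ → ℤ, (∀ z, h (z + n) = h z - k) ∧
      (∀ z, h (z + 1) = h z + 1 ∨ h (z + 1) = h z - 1) ∧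
      ∀ i : Fin n, h ((i : ℕ) + 1) = h (i : ℕ) + 1 ↔ i ∈ S := by
  classical
  let c : ℕ → ℤ := fun t => if ∃ i ∈ S, i.val = t then 1 else -1
  let g : ℕ → ℤ := fun m => ∑ t ∈ Finset.range m, c t
  have hc : ∀ t, c t = 1 ∨ c t = -1 := by
    intro t
    by_cases ht : ∃ i ∈ S, i.val = t
    · exact Or.inl (if_pos ht)
    · exact Or.inr (if_neg ht)
  have hcS : ∀ i : Fin n, c i = if i ∈ S then 1 else -1 := by
    intro i
    have : (∃ j ∈ S, j.val = i.val) ↔ i ∈ S :=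
      ⟨fun ⟨j, hj, hji⟩ => Fin.ext hji ▸ hj, fun hi => ⟨i, hi, rfl⟩⟩
    simp only [c, this]
  have hgs : ∀ m, g (m + 1) = g m + c m := fun m => Finset.sum_range_succ _ _
  have hgn : g n = -k := by
    have h1 : g n = ∑ i : Fin n, (if i ∈ S then (1 : ℤ) else -1) := by
      simp only [g]
      rw [Finset.sum_range]
      exact Finset.sum_congr rfl fun i _ => hcS i
    have h2 : ∀ i : Fin n, (if i ∈ S then (1 : ℤ) else -1) = 2 * (if i ∈ S then 1 else 0) - 1 := by
      intro i
      split_ifs <;> norm_num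
    rw [h1, Finset.sum_congr rfl fun i _ => h2 i, Finset.sum_sub_distrib, ← Finset.mul_sum]
    simp
    omega
  let h : ℤ → ℤ := fun z => g (z % n).toNat - k * (z / n)
  have hn' : (n : ℤ) ≠ 0 := by omega
  have hstep : ∀ z, h (z + 1) = h z + c (z % n).toNat := by
    intro z
    have hr0 := Int.emod_nonneg z hn'
    have hr1 := Int.emod_lt_of_pos z (show (0 : ℤ) < n by omega)
    have hz := Int.emod_add_mul_ediv z n
    by_cases hlt : z % n + 1 < n
    · have hdiv : (z + 1) / n = z / n ∧ (z + 1) % n = z % n + 1 := by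
        rw [Int.ediv_emod_unique (by omega)]
        refine ⟨by linarith, by omega, hlt⟩
      simp only [h]
      rw [hdiv.1, hdiv.2, show (z % n + 1).toNat = (z % n).toNat + 1 by omega, hgs]
      ring
    · have hdiv : (z + 1) / n = z / n + 1 ∧ (z + 1) % n = 0 := by
        rw [Int.ediv_emod_unique (by omega)]
        refine ⟨by linarith, le_rfl, by omega⟩
      have h1 := hgs (z % n).toNat
      rw [show (z % n).toNat + 1 = n by omega, hgn] at h1
      simp only [h]
      rw [hdiv.1, hdiv.2]
      have h0 : g (0 : ℤ).toNat = 0 := by simp [g]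
      rw [h0]
      linarith
  refine ⟨h, ?_, ?_, ?_⟩
  · intro z
    simp only [h]
    rw [Int.add_emod_right, Int.add_ediv_of_dvd_right (dvd_refl _), Int.ediv_self hn']
    ring
  · intro z
    rw [hstep]
    rcases hc (z % n).toNat with h1 | h1 <;> rw [h1]
    · exact Or.inl rfl
    · exact Or.inr rfl
  · intro i
    have hmod : ((i : ℕ) : ℤ) % n = (i : ℕ) := Int.emod_eq_of_lt (by omega) (by omega)
    rw [hstep, hmod, Int.toNat_natCast, hcS]
    split_ifs with hi <;> simp [hi]

/-- The arcs of a height function, read modulo `n`: `i` is matched with `s` when the arc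
starting at `i` ends at `s` or at its translate `s + n`. -/
def ArcPair {n : ℕ} (h : ℤ → ℤ) (i s : Fin n) : Prop :=
  Arc h (i : ℕ) (s : ℕ) ∨ Arc h (i : ℕ) ((s : ℕ) + n)

/-- Each colouring with at least one more white than black dot comes from a half-pairing. -/
lemma exists_halfPairing {n k : ℕ} (hk : 1 ≤ k) (S : Finset (Fin n))
    (hS : k + 2 * S.card = n) : ∃ π : HalfPairing n, ∀ i, Black π i ↔ i ∈ S := by
  classical
  have hn : 0 < n := by omega
  obtain ⟨h, hper, hstep, hup⟩ := exists_height hn S hS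
  have hk' : (0 : ℤ) < k := by omega
  have hlen : ∀ {a b : ℤ}, Arc h a b → b < a + n := fun hb => hb.length_lt hk' hn hper
  have hRr : ∀ i s t : Fin n, ArcPair h i s → ArcPair h i t → s = t := by
    intro i s t hs ht
    ext
    rcases hs with hs | hs <;> rcases ht with ht | ht <;>
      have := hs.right_unique ht <;> omega
  have hRl : ∀ i j s : Fin n, ArcPair h i s → ArcPair h j s → i = j := by
    intro i j s hs ht
    ext
    rcases hs with hs | hs <;> rcases ht with ht | ht
    · have := hs.left_unique ht; omega
    · have := (hs.shift hper).left_unique ht; omega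
    · have := hs.left_unique (ht.shift hper); omega
    · have := hs.left_unique ht; omega
  have hRS : ∀ i s : Fin n, ArcPair h i s → i ∈ S := by
    intro i s hs
    rw [← hup]
    have hpos : h (i : ℕ) < h ((i : ℕ) + 1) := by
      rcases hs with hs | hs <;>
        exact hs.2.2 _ (by omega) (by have := hs.1; omega)
    have := hstep (i : ℕ)
    omega
  have hRW : ∀ i s : Fin n, ArcPair h i s → s ∉ S := by
    intro i s hs hmem
    have h1 := (hup s).mpr hmem
    rcases hs with hs | hs
    · have := hs.2.2 _ hs.1 le_rfl
      have := hs.2.1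
      omega
    · have := hs.2.2 _ hs.1 le_rfl
      have h2 := hs.2.1
      have := hper (s : ℕ)
      have := hper ((s : ℕ) + 1)
      rw [show ((s : ℕ) : ℤ) + n + 1 = (s : ℕ) + 1 + n by ring] at h2
      omega
  have hRex : ∀ i ∈ S, ∃ s : Fin n, ArcPair h i s := by
    intro i hi
    obtain ⟨b, hb⟩ := exists_arc_right hk' hn hper hstep ((hup i).mpr hi)
    have h1 := hb.1
    have h2 := hlen hb
    by_cases hbn : b < n
    · refine ⟨⟨b.toNat, by omega⟩, Or.inl ?_⟩
      rwa [show ((b.toNat : ℕ) : ℤ) = b by omega]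
    · refine ⟨⟨(b - n).toNat, by omega⟩, Or.inr ?_⟩
      rwa [show (((b - n).toNat : ℕ) : ℤ) + n = b by omega]
  have hRarc : ∀ (x : Fin n) (a : ℤ), Arc h a (x : ℕ) → ∃ i : Fin n, ArcPair h i x := by
    intro x a ha
    have h1 := ha.1
    have h2 := hlen ha
    by_cases ha0 : 0 ≤ a
    · refine ⟨⟨a.toNat, by omega⟩, Or.inl ?_⟩
      rwa [show ((a.toNat : ℕ) : ℤ) = a by omega]
    · refine ⟨⟨(a + n).toNat, by omega⟩, Or.inr ?_⟩
      rw [show (((a + n).toNat : ℕ) : ℤ) = a + n by omega]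
      exact ha.shift hper
  let R : Setoid (Fin n) :=
    { r := fun i j => i = j ∨ ArcPair h i j ∨ ArcPair h j i
      iseqv :=
        { refl := fun i => Or.inl rfl
          symm := by
            rintro i j (rfl | hr | hr)
            · exact Or.inl rfl
            · exact Or.inr (Or.inr hr)
            · exact Or.inr (Or.inl hr)
          trans := by
            rintro i j l (rfl | hr | hr) (rfl | hr' | hr')
            · exact Or.inl rfl
            · exact Or.inr (Or.inl hr')
            · exact Or.inr (Or.inr hr')
            · exact Or.inr (Or.inl hr)
            · exact absurd (hRS _ _ hr') (hRW _ _ hr)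
            · exact Or.inl (hRl _ _ _ hr hr')
            · exact Or.inr (Or.inr hr)
            · exact Or.inl (hRr _ _ _ hr hr')
            · exact absurd (hRS _ _ hr) (hRW _ _ hr') } }
  let P : Finpartition (Finset.univ : Finset (Fin n)) := Finpartition.ofSetoid R
  have hrel : ∀ i j, Rel P i j ↔ i = j ∨ ArcPair h i j ∨ ArcPair h j i := by
    intro i j
    have h1 : j ∈ P.part i ↔ R i j := Finpartition.mem_part_ofSetoid_iff_rel
    change _ ↔ R i j
    rw [← h1]
    constructor
    · rintro ⟨B, hB, hi, hj⟩
      rwa [P.part_eq_of_mem hB hi]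
    · intro hj
      exact ⟨P.part i, P.part_mem.mpr (Finset.mem_univ i), P.mem_part (Finset.mem_univ i), hj⟩
  have hirrefl : ∀ i : Fin n, ¬ ArcPair h i i := fun i hi => hRW _ _ hi (hRS _ _ hi)
  have hsing : ∀ i, IsSingleton P i ↔ i ∉ S ∧ ∀ a, ¬ Arc h a (i : ℕ) := by
    intro i
    rw [isSingleton_iff]
    constructor
    · intro hi
      constructor
      · intro hiS
        obtain ⟨s, hs⟩ := hRex i hiS
        have := hi s ((hrel i s).mpr (Or.inr (Or.inl hs)))
        subst this
        exact hirrefl _ hs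
      · intro a ha
        obtain ⟨j, hj⟩ := hRarc i a ha
        have := hi j ((hrel i j).mpr (Or.inr (Or.inr hj)))
        subst this
        exact hirrefl _ hj
    · rintro ⟨h1, h2⟩ j hij
      rcases (hrel i j).mp hij with rfl | hr | hr
      · rfl
      · exact absurd (hRS _ _ hr) h1
      · rcases hr with hr | hr
        · exact absurd hr (h2 _)
        · have := hr.unshift hper
          rw [add_sub_cancel_right] at this
          exact absurd this (h2 _)
  -- neither of the lifts `x`, `x + n` of a through string `x` is below an arc
  have hout : ∀ x : Fin n, IsSingleton P x → ∀ a b : ℤ, Arc h a b →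
      ¬ (a ≤ (x : ℕ) ∧ (x : ℕ) ≤ b) := by
    intro x hx a b hab hmem
    obtain ⟨h1, h2⟩ := (hsing x).mp hx
    have hdown : h ((x : ℕ) + 1) = h (x : ℕ) - 1 :=
      (hstep (x : ℕ)).resolve_left fun hu => h1 ((hup x).mp hu)
    rcases eq_or_lt_of_le hmem.1 with heq | hlt
    · have := hab.2.2 (a + 1) (by omega) (by have := hab.1; omega)
      rw [heq] at this
      omega
    · obtain ⟨y, hy⟩ := exists_arc_left hstep hab hlt hmem.2 hdown
      exact h2 y hy
  have hout' : ∀ x : Fin n, IsSingleton P x → ∀ a b : ℤ, Arc h a b →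
      ¬ (a ≤ (x : ℕ) + n ∧ (x : ℕ) + n ≤ b) := by
    intro x hx a b hab hmem
    exact hout x hx _ _ (hab.unshift hper) ⟨by omega, by omega⟩
  -- a block containing `i < j` is the arc `(i, j)` or the arc `(j, i + n)`
  have hlt : ∀ i j : Fin n, i < j → Rel P i j →
      Arc h (i : ℕ) (j : ℕ) ∨ Arc h (j : ℕ) ((i : ℕ) + n) := by
    intro i j hij hr
    have hij' : i.val < j.val := hij
    rcases (hrel i j).mp hr with rfl | (hr | hr) | (hr | hr)
    · omega
    · exact Or.inl hr
    · have := hlen hr; omega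
    · have := hr.1; omega
    · exact Or.inr hr
  have hncr : ∀ i1 i2 i3 i4 : Fin n, i1 < i2 → i2 < i3 → i3 < i4 → Rel P i1 i3 →
      ¬ Rel P i2 i4 := by
    intro i1 i2 i3 i4 h12 h23 h34 h13 h24
    have h12' : i1.val < i2.val := h12
    have h23' : i2.val < i3.val := h23
    have h34' : i3.val < i4.val := h34
    rcases hlt _ _ (h12.trans h23) h13 with h13 | h13 <;>
      rcases hlt _ _ (h23.trans h34) h24 with h24 | h24
    · have := h13.nested h24 (by omega) (by omega); omega
    · have := (h24.unshift hper).nested h13 (by omega) (by omega); omega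
    · have := h24.nested h13 (by omega) (by omega); omega
    · have := h13.nested h24 (by omega) (by omega); omega
  have hcount := card_add_two_mul S (Finset.univ.filter (fun i => IsSingleton P i)) (ArcPair h)
    (by
      intro i hi hiT
      simp only [Finset.mem_filter] at hiT
      exact ((hsing i).mp hiT.2).1 hi)
    (by
      intro i hi
      obtain ⟨s, hs⟩ := hRex i hi
      refine ⟨s, hRW _ _ hs, ?_, hs⟩
      simp only [Finset.mem_filter, Finset.mem_univ, true_and, isSingleton_iff]
      intro hsi
      have := hsi i ((hrel s i).mpr (Or.inr (Or.inr hs)))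
      subst this
      exact hirrefl _ hs)
    (by
      intro s hsS hsT
      simp only [Finset.mem_filter, Finset.mem_univ, true_and, hsing, not_and, not_forall,
        not_not] at hsT
      obtain ⟨a, ha⟩ := hsT hsS
      obtain ⟨i, hi⟩ := hRarc s a ha
      exact ⟨i, hRS _ _ hi, hi⟩)
    hRl hRr
  have hne : (Finset.univ.filter (fun i => IsSingleton P i)).Nonempty := by
    rw [← Finset.card_pos]
    omega
  obtain ⟨x0, hx0⟩ := hne
  have hx0 : IsSingleton P x0 := (Finset.mem_filter.mp hx0).2
  let π : HalfPairing n :=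
    { P := P
      card_le := by
        intro B hB
        by_contra hcard
        obtain ⟨i, hi, j, hj, l, hl, hij, hil, hjl⟩ := Finset.two_lt_card.mp (not_le.mp hcard)
        have e1 := (hrel i j).mp ⟨B, hB, hi, hj⟩
        have e2 := (hrel i l).mp ⟨B, hB, hi, hl⟩
        rcases e1 with e1 | e1 | e1
        · exact hij e1
        · rcases e2 with e2 | e2 | e2
          · exact hil e2
          · exact hjl (hRr _ _ _ e1 e2)
          · exact hRW _ _ e2 (hRS _ _ e1)
        · rcases e2 with e2 | e2 | e2
          · exact hil e2
          · exact hRW _ _ e1 (hRS _ _ e2)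
          · exact hjl (hRl _ _ _ e1 e2)
      exists_singleton := ⟨x0, hx0⟩
      nc := fun i1 i2 i3 i4 h12 h23 h34 h13 h24 =>
        absurd h24 (hncr i1 i2 i3 i4 h12 h23 h34 h13)
      nc_tilde := by
        intro i1 i2 i3 i4 h12 h23 h34 h13 h24
        have h12' : i1.val < i2.val := h12
        have h23' : i2.val < i3.val := h23
        have h34' : i3.val < i4.val := h34
        rcases h13 with h13 | ⟨s1, s3⟩
        · rcases h24 with h24 | ⟨s2, s4⟩
          · exact absurd h24 (hncr i1 i2 i3 i4 h12 h23 h34 h13)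
          · exfalso
            rcases hlt _ _ (h12.trans h23) h13 with h13 | h13
            · exact hout i2 s2 _ _ h13 ⟨by omega, by omega⟩
            · exact hout i4 s4 _ _ h13 ⟨by omega, by omega⟩
        · rcases h24 with h24 | ⟨s2, s4⟩
          · exfalso
            rcases hlt _ _ (h23.trans h34) h24 with h24 | h24
            · exact hout i3 s3 _ _ h24 ⟨by omega, by omega⟩
            · exact hout' i1 s1 _ _ h24 ⟨by omega, by omega⟩
          · exact Or.inr ⟨s1, s2⟩ }
  have hblack : ∀ i ∈ S, Black π i := by
    intro i hi
    obtain ⟨s, hs⟩ := hRex i hi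
    refine ⟨s, ⟨?_, (hrel i s).mpr (Or.inr (Or.inl hs))⟩, ?_⟩
    · rintro rfl
      exact hirrefl _ hs
    · intro x hx hxs
      rw [inCyc_iff] at hx
      have := cdist_cases i x
      have := cdist_cases i s
      have hxi : i.val ≤ x.val ∨ x.val < i.val := le_or_gt _ _
      rcases hs with hs | hs
      · have := hs.1
        exact hout x hxs _ _ hs ⟨by omega, by omega⟩
      · have := hlen hs
        rcases hxi with hxi | hxi
        · exact hout x hxs _ _ hs ⟨by omega, by omega⟩
        · exact hout' x hxs _ _ hs ⟨by omega, by omega⟩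
  refine ⟨π, fun i => ⟨fun hi => ?_, hblack i⟩⟩
  by_contra hiS
  obtain ⟨s, his, harc⟩ := hi
  rcases (hrel i s).mp his.2 with he | he | he
  · exact his.1 he
  · exact hiS (hRS _ _ he)
  · exact not_black_of_black π (pairs_symm π his) (hblack s (hRS _ _ he)) ⟨s, his, harc⟩

/-- The map sending a non-crossing half-pairing on `[n]` with `k` through
strings to its set of black dots — the outward-oriented points of its pairs
(all other points, i.e. the inward-oriented points and the through strings,
being white) — is a bijection onto the collection of subsets of `[n]` of size
`(n-k)/2`. -/
theorem halfPairing_coloring_bijection (n k : ℕ) (hk : 1 ≤ k) (hkn : k ≤ n)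
    (hpar : Even (n - k)) :
    Set.BijOn
      (fun π : HalfPairing n => {i : Fin n | OutOriented π i ∧ ¬ IsSingleton π.P i})
      {π : HalfPairing n | (throughFinset π).card = k}
      {S : Set (Fin n) | S.ncard = (n - k) / 2} := by
  have hfun : (fun π : HalfPairing n => {i : Fin n | OutOriented π i ∧ ¬ IsSingleton π.P i}) =
      fun π => {i | Black π i} := by
    funext π
    ext i
    exact black_iff π i
  rw [hfun]
  refine ⟨?_, ?_, ?_⟩
  · intro π hπ
    have h1 : (throughFinset π).card = k := hπ
    have h2 := card_through_add π
    change {i | Black π i}.ncard = (n - k) / 2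
    omega
  · intro π _ π' _ heq
    exact halfPairing_ext fun i => Set.ext_iff.mp heq i
  · intro S hS
    have hS' : S.ncard = (n - k) / 2 := hS
    obtain ⟨m, hm⟩ := hpar
    rw [Set.ncard_eq_toFinset_card'] at hS'
    obtain ⟨π, hπ⟩ := exists_halfPairing hk S.toFinset (by omega)
    have hSet : {i | Black π i} = S := by
      ext i
      exact (hπ i).trans Set.mem_toFinset
    refine ⟨π, ?_, hSet⟩
    have h2 := card_through_add π
    rw [hSet, Set.ncard_eq_toFinset_card'] at h2
    change (throughFinset π).card = k
    omega

end NCC
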